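/- arXiv:2506.03754 — 2 statements merged into one kernel-verified Lean document; each statement's English description precedes it below -/
import Mathlib

section
/- For every 5 × 5 totally nonnegative real matrix Q, one has Δ(12|45)·Δ(345|123) + Δ(12|34)·Δ(345|125) − Δ(12|35)·Δ(345|124) ≥ 0, where Δ(I|J) denotes the minor of Q with row set I and column set J. -/
/-!
Let `Q` be a totally nonnegative square matrix and let `Z` be `Q` with its upper left `r × s` block
replaced by zeros. Then `(-1) ^ (r * s) * det Z ≥ 0`; for `n = 5`, `r = s = 2`, Laplace expansion of
`det Z` along its first two rows gives the required combination of products of minors.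

For the sign of `det Z`, clear the first column below the row `r` from the bottom upwards, each time
subtracting a multiple of the row just above (Neville elimination). This multiplies `det Z` by a
positive pivot and keeps `Q` totally nonnegative, which follows from a three-term Plücker relation.
If the pivot is zero and the entry below it is not, the pivot row vanishes, so `det Z = 0`. The
first column of the cleared `Z` has at most one nonzero entry, and expanding along it reduces `s`
by one.
-/

open Function Matrix

section Pluecker

variable {R : Type*} [CommRing R]

/-- Up to sign and row order, the three-term Plücker relation for the vectors `A i`, `A l`, `x` and
the standard basis vector with index `j`. -/
theorem adjugate_updateRow_apply_mul_det {n : Type*} [Fintype n] [DecidableEq n] (A : Matrix n n R)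
    {i l : n} (hil : i ≠ l) (x : n → R) (j : n) :
    (A.updateRow l x).adjugate j i * A.det =
      (A.updateRow l x).det * A.adjugate j i - A.adjugate j l * (A.updateRow i x).det := by
  set B := A.updateRow l x with hB
  have hBA : B * A.adjugate = (A.det • (1 : Matrix n n R)).updateRow l (x ᵥ* A.adjugate) := by
    rw [hB, updateRow_mul, mul_adjugate]
  have hx : (x ᵥ* A.adjugate) i = (A.updateRow i x).det := by
    rw [← cramer_transpose_apply, cramer_eq_adjugate_mulVec, ← adjugate_transpose,
      mulVec_transpose]
  have hjl : B.adjugate j l = A.adjugate j l := by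
    simp only [hB, adjugate_apply, updateRow_idem]
  have hprod : ∑ k, B.adjugate j k * (B * A.adjugate) k i = B.det * A.adjugate j i := by
    rw [← Matrix.mul_apply, ← Matrix.mul_assoc, adjugate_mul, smul_mul, Matrix.one_mul,
      Matrix.smul_apply, smul_eq_mul]
  rw [Fintype.sum_eq_add l i hil.symm fun k hk => by simp [hBA, hk.1, hk.2], hBA, updateRow_self,
    updateRow_ne hil, hx, hjl, Matrix.smul_apply, one_apply_eq, smul_eq_mul, mul_one] at hprod
  linear_combination hprod

/-- The signs disappear when the two rows are adjacent. -/
theorem det_submatrix_updateRow_mul_det {k : ℕ} (A : Matrix (Fin (k + 1)) (Fin (k + 1)) R)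
    (i : Fin k) (x : Fin (k + 1) → R) (j : Fin (k + 1)) :
    ((A.updateRow i.succ x).submatrix i.castSucc.succAbove j.succAbove).det * A.det =
      (A.updateRow i.succ x).det * (A.submatrix i.castSucc.succAbove j.succAbove).det +
        (A.submatrix i.succ.succAbove j.succAbove).det * (A.updateRow i.castSucc x).det := by
  have h := adjugate_updateRow_apply_mul_det A i.castSucc_lt_succ.ne x j
  simp only [adjugate_fin_succ_eq_det_submatrix, Fin.val_castSucc, Fin.val_succ] at h
  have hsign : IsUnit ((-1 : R) ^ (i + j : ℕ)) := isUnit_one.neg.pow _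
  refine hsign.mul_left_cancel ?_
  linear_combination h

/-- Multiply by a positive minor of `A.updateRow i.succ x` that omits the row `i.castSucc`, and use
the Plücker relation. If there is no such minor, `(A.updateRow i.succ x).det` vanishes. -/
theorem mul_det_updateRow_le_of_minors [LinearOrder R] [IsStrictOrderedRing R] {k : ℕ}
    {A : Matrix (Fin (k + 1)) (Fin (k + 1)) R} {i : Fin k} {x : Fin (k + 1) → R} {α β : R}
    (hα : 0 ≤ α) (hA : 0 ≤ A.det) (hsucc : 0 ≤ (A.updateRow i.succ x).det)
    (hcast : 0 ≤ (A.updateRow i.castSucc x).det)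
    (hAminor : ∀ j : Fin (k + 1), 0 ≤ (A.submatrix i.succ.succAbove j.succAbove).det)
    (hminor : ∀ j : Fin (k + 1),
      0 ≤ ((A.updateRow i.succ x).submatrix i.castSucc.succAbove j.succAbove).det)
    (hle : ∀ j : Fin (k + 1),
      β * ((A.updateRow i.succ x).submatrix i.castSucc.succAbove j.succAbove).det ≤
        α * (A.submatrix i.castSucc.succAbove j.succAbove).det) :
    β * (A.updateRow i.succ x).det ≤ α * A.det := by
  set B := A.updateRow i.succ x
  by_cases hpos : ∃ j : Fin (k + 1), 0 < (B.submatrix i.castSucc.succAbove j.succAbove).det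
  · obtain ⟨j, hj⟩ := hpos
    refine le_of_mul_le_mul_left ?_ hj
    calc (B.submatrix i.castSucc.succAbove j.succAbove).det * (β * B.det)
        = B.det * (β * (B.submatrix i.castSucc.succAbove j.succAbove).det) := by ring
      _ ≤ B.det * (α * (A.submatrix i.castSucc.succAbove j.succAbove).det) :=
          mul_le_mul_of_nonneg_left (hle j) hsucc
      _ ≤ B.det * (α * (A.submatrix i.castSucc.succAbove j.succAbove).det) +
            α * ((A.submatrix i.succ.succAbove j.succAbove).det *
              (A.updateRow i.castSucc x).det) :=
          le_add_of_nonneg_right (mul_nonneg hα (mul_nonneg (hAminor j) hcast))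
      _ = (B.submatrix i.castSucc.succAbove j.succAbove).det * (α * A.det) := by
          linear_combination -α * det_submatrix_updateRow_mul_det A i x j
  · push Not at hpos
    have hdet : B.det = 0 := by
      rw [det_succ_row B i.castSucc]
      exact Finset.sum_eq_zero fun j _ => by rw [(hpos j).antisymm (hminor j), mul_zero]
    rw [hdet, mul_zero]
    exact mul_nonneg hα hA

end Pluecker

theorem strictMono_update {ι α : Type*} [Preorder ι] [DecidableEq ι] [Preorder α] {f : ι → α}
    (hf : StrictMono f) {i : ι} {x : α} (hlt : ∀ j < i, f j < x) (hgt : ∀ j, i < j → x < f j) :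
    StrictMono (update f i x) := by
  intro j l hjl
  rcases eq_or_ne j i with rfl | hj
  · simpa [hjl.ne'] using hgt l hjl
  · rcases eq_or_ne l i with rfl | hl
    · simpa [hj] using hlt j hjl
    · simpa [hj, hl] using hf hjl

theorem submatrix_update_left {m n o p α : Type*} [DecidableEq o] (M : Matrix m n α)
    (f : o → m) (g : p → n) (t : o) (c : m) :
    M.submatrix (update f t c) g = (M.submatrix f g).updateRow t fun j => M c (g j) := by
  ext i j
  rcases eq_or_ne i t with rfl | hi <;> simp [*]

/-- A matrix is totally nonnegative if its minors, taken with rows and columns in increasing order,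
are nonnegative. -/
def IsTotallyNonneg {ι κ R : Type*} [Preorder ι] [Preorder κ] [CommRing R] [LE R]
    (M : Matrix ι κ R) : Prop :=
  ∀ (k : ℕ) (f : Fin k → ι) (g : Fin k → κ),
    StrictMono f → StrictMono g → 0 ≤ (M.submatrix f g).det

/-- The division-free Neville elimination step that uses the row `c` to clear the first entry of the
row `d`: the row `d` becomes `M c ⊥ • M d - M d ⊥ • M c`. -/
def nevilleStep {ι κ R : Type*} [DecidableEq ι] [LE κ] [OrderBot κ] [Ring R] (M : Matrix ι κ R)
    (c d : ι) : Matrix ι κ R :=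
  M.updateRow d (M c ⊥ • M d - M d ⊥ • M c)

section NevilleStep

variable {ι κ R : Type*} [DecidableEq ι] [LE κ] [OrderBot κ] [CommRing R] (M : Matrix ι κ R) (c : ι)

theorem nevilleStep_apply_bot (d : ι) : nevilleStep M c d d ⊥ = 0 := by
  simp [nevilleStep, mul_comm]

theorem nevilleStep_apply_of_ne {d i : ι} (hi : i ≠ d) : nevilleStep M c d i = M i :=
  updateRow_ne hi

theorem det_submatrix_nevilleStep {k : ℕ} {f : Fin k → ι} (hf : Injective f) (g : Fin k → κ)
    (t : Fin k) :
    ((nevilleStep M c (f t)).submatrix f g).det =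
      M c ⊥ * (M.submatrix f g).det - M (f t) ⊥ * (M.submatrix (update f t c) g).det := by
  have hrow : (nevilleStep M c (f t)).submatrix f g = (M.submatrix f g).updateRow t
      (M c ⊥ • (M.submatrix f g) t + (-M (f t) ⊥) • fun j => M c (g j)) := by
    ext i j
    rcases eq_or_ne i t with rfl | hi
    · simp [nevilleStep, sub_eq_add_neg]
    · simp [nevilleStep, hi, hf.ne hi]
  rw [hrow, det_updateRow_add, det_updateRow_smul, det_updateRow_smul, updateRow_eq_self,
    ← submatrix_update_left]
  ring

end NevilleStep

namespace IsTotallyNonneg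

section Preorder

variable {ι κ R : Type*} [Preorder ι] [Preorder κ] [CommRing R] [LE R] {M : Matrix ι κ R}

theorem apply_nonneg (hM : IsTotallyNonneg M) (i : ι) (j : κ) : 0 ≤ M i j := by
  simpa using hM 1 (fun _ => i) (fun _ => j) (Subsingleton.strictMono _) (Subsingleton.strictMono _)

protected theorem submatrix {ι' κ' : Type*} [Preorder ι'] [Preorder κ'] (hM : IsTotallyNonneg M)
    {f : ι' → ι} {g : κ' → κ} (hf : StrictMono f) (hg : StrictMono g) :
    IsTotallyNonneg (M.submatrix f g) :=
  fun k f' g' hf' hg' => hM k (f ∘ f') (g ∘ g') (hf.comp hf') (hg.comp hg')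

end Preorder

variable {ι κ R : Type*} [LinearOrder ι] [LinearOrder κ] [CommRing R] [LinearOrder R]
  {M : Matrix ι κ R}

theorem det_submatrix_update_nonneg (hM : IsTotallyNonneg M) {c d : ι} (hcd : c ⋖ d) {k : ℕ}
    {f : Fin k → ι} {g : Fin k → κ} (hf : StrictMono f) (hg : StrictMono g) {t : Fin k}
    (ht : f t = d) : 0 ≤ (M.submatrix (update f t c) g).det := by
  by_cases hc : ∃ s ≠ t, f s = c
  · obtain ⟨s, hst, hs⟩ := hc
    exact (det_zero_of_row_eq hst (by ext; simp [hst, hs])).ge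
  · push Not at hc
    refine hM _ _ _ (strictMono_update hf (fun j hj => ?_) fun j hj => ?_) hg
    · exact (hcd.le_of_lt (ht ▸ hf hj)).lt_of_ne (hc j hj.ne)
    · exact hcd.lt.trans (ht ▸ hf hj)

variable [OrderBot κ]

theorem row_eq_zero [IsStrictOrderedRing R] (hM : IsTotallyNonneg M) {c d : ι} (hcd : c < d)
    (hc : M c ⊥ = 0) (hd : 0 < M d ⊥) : M c = 0 := by
  ext j
  rcases (bot_le (a := j)).eq_or_lt with rfl | hj
  · exact hc
  · have hdet := hM 2 ![c, d] ![⊥, j] (by simpa) (by simpa)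
    simp only [det_fin_two, submatrix_apply, cons_val_zero, cons_val_one, hc, zero_mul, zero_sub,
      Left.nonneg_neg_iff] at hdet
    exact (nonpos_of_mul_nonpos_left hdet hd).antisymm (hM.apply_nonneg c j)

/-- The difference of the two sides is the minor with the row `c` and the column `⊥` adjoined. -/
theorem mul_det_submatrix_update_zero_le [IsStrictOrderedRing R] (hM : IsTotallyNonneg M) {c : ι}
    {k : ℕ} {f : Fin (k + 1) → ι} {g : Fin (k + 1) → κ} (hf : StrictMono f) (hg : StrictMono g)
    (hc : c < f 0) (hzero : ∀ e, f 0 < e → M e ⊥ = 0) :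
    M (f 0) ⊥ * (M.submatrix (update f 0 c) g).det ≤ M c ⊥ * (M.submatrix f g).det := by
  have hexpand : (M.submatrix (vecCons c f) (vecCons ⊥ g)).det =
      M c ⊥ * (M.submatrix f g).det - M (f 0) ⊥ * (M.submatrix (update f 0 c) g).det := by
    have hrows : vecCons c f ∘ (Fin.succ 0).succAbove = update f 0 c := by
      ext i
      cases i using Fin.cases <;> simp
    have htail : ∀ i : Fin k, M (f i.succ) ⊥ = 0 := fun i => hzero _ (hf i.succ_pos)
    have hcols : vecCons ⊥ g ∘ Fin.succ = g := rfl
    rw [det_succ_column_zero, Fin.sum_univ_succ, Fin.sum_univ_succ,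
      Finset.sum_eq_zero fun i _ => by simp [htail], submatrix_submatrix, submatrix_submatrix,
      hrows, hcols, Fin.succAbove_zero]
    simp [← sub_eq_add_neg, Function.comp_def]
  rw [← sub_nonneg, ← hexpand]
  rcases (bot_le (a := g 0)).eq_or_lt with hbot | hbot
  · exact (det_zero_of_column_eq (Fin.succ_ne_zero 0) fun i => by simp [← hbot]).ge
  · exact hM _ _ _ (strictMono_vecCons.2 ⟨hc, hf⟩) (strictMono_vecCons.2 ⟨hbot, hg⟩)

theorem mul_det_submatrix_update_le [IsStrictOrderedRing R] (hM : IsTotallyNonneg M) {c d : ι}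
    (hcd : c ⋖ d) (hzero : ∀ e, d < e → M e ⊥ = 0) {k : ℕ} {f : Fin k → ι} {g : Fin k → κ}
    (hf : StrictMono f) (hg : StrictMono g) {t : Fin k} (ht : f t = d) :
    M d ⊥ * (M.submatrix (update f t c) g).det ≤ M c ⊥ * (M.submatrix f g).det := by
  induction k with
  | zero => exact t.elim0
  | succ k ih =>
    cases t using Fin.cases with
    | zero =>
      subst ht
      exact hM.mul_det_submatrix_update_zero_le hf hg hcd.lt hzero
    | succ i =>
      have hprev : f i.castSucc ≤ c := hcd.le_of_lt (ht ▸ hf i.castSucc_lt_succ)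
      have hf' (l : Fin (k + 1)) : StrictMono (f ∘ l.succAbove) :=
        hf.comp (Fin.strictMono_succAbove l)
      have hg' (j : Fin (k + 1)) : StrictMono (g ∘ j.succAbove) :=
        hg.comp (Fin.strictMono_succAbove j)
      have ht' : (f ∘ i.castSucc.succAbove) i = d := by simpa using ht
      have hupdate : update f i.succ c ∘ i.castSucc.succAbove =
          update (f ∘ i.castSucc.succAbove) i c := by
        simpa using update_comp_eq_of_injective f (Fin.succAbove_right_injective (p := i.castSucc))
          i c
      have hcast : StrictMono (update f i.castSucc c) := strictMono_update hf
        (fun j hj => (hf hj).trans_le hprev)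
        fun j hj => hcd.lt.trans_le (ht ▸ hf.monotone (Fin.castSucc_lt_iff_succ_le.1 hj))
      rw [submatrix_update_left]
      refine mul_det_updateRow_le_of_minors (hM.apply_nonneg c ⊥) (hM _ _ _ hf hg) ?_ ?_
        (fun j => ?_) (fun j => ?_) fun j => ?_
      · rw [← submatrix_update_left]
        exact hM.det_submatrix_update_nonneg hcd hf hg ht
      · rw [← submatrix_update_left]
        exact hM _ _ _ hcast hg
      · exact hM _ _ _ (hf' _) (hg' j)
      · rw [← submatrix_update_left, submatrix_submatrix, hupdate]
        exact hM.det_submatrix_update_nonneg hcd (hf' _) (hg' j) ht'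
      · rw [← submatrix_update_left, submatrix_submatrix, hupdate]
        exact ih (hf' _) (hg' j) ht'

protected theorem nevilleStep [IsStrictOrderedRing R] (hM : IsTotallyNonneg M) {c d : ι}
    (hcd : c ⋖ d) (hzero : ∀ e, d < e → M e ⊥ = 0) : IsTotallyNonneg (nevilleStep M c d) := by
  intro k f g hf hg
  by_cases hd : ∃ t, f t = d
  · obtain ⟨t, rfl⟩ := hd
    rw [det_submatrix_nevilleStep M c hf.injective, sub_nonneg]
    exact hM.mul_det_submatrix_update_le hcd hzero hf hg rfl
  · push Not at hd
    have hrow : (nevilleStep M c d).submatrix f g = M.submatrix f g := by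
      ext i j
      simp [nevilleStep_apply_of_ne M c (hd i)]
    rw [hrow]
    exact hM k f g hf hg

end IsTotallyNonneg

/-- The matrix `M` with its upper left `r × s` block replaced by zeros. -/
def zeroCorner {m n : ℕ} {R : Type*} [Zero R] (r s : ℕ) (M : Matrix (Fin m) (Fin n) R) :
    Matrix (Fin m) (Fin n) R :=
  of fun i j => if (i : ℕ) < r ∧ (j : ℕ) < s then 0 else M i j

section ZeroCorner

variable {R : Type*} [CommRing R] {n : ℕ}

theorem zeroCorner_zero_right {m : ℕ} (r : ℕ) (M : Matrix (Fin m) (Fin n) R) :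
    zeroCorner r 0 M = M := by
  ext; simp [zeroCorner]

theorem det_zeroCorner_nevilleStep {r s : ℕ} (M : Matrix (Fin (n + 1)) (Fin (n + 1)) R)
    {c d : Fin (n + 1)} (hc : r ≤ c) (hcd : c < d) :
    (zeroCorner r s (nevilleStep M c d)).det = M c 0 * (zeroCorner r s M).det := by
  have hd : r ≤ d := hc.trans hcd.le
  have hrow : zeroCorner r s (nevilleStep M c d) = (zeroCorner r s M).updateRow d
      (M c 0 • zeroCorner r s M d + (-M d 0) • zeroCorner r s M c) := by
    ext i j
    rcases eq_or_ne i d with rfl | hi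
    · simp [zeroCorner, nevilleStep, bot_eq_zero, hc.not_gt, hd.not_gt, sub_eq_add_neg]
    · simp [zeroCorner, nevilleStep, hi]
  rw [hrow, det_updateRow_add, det_updateRow_smul, det_updateRow_smul, updateRow_eq_self,
    det_updateRow_eq_zero hcd.ne, mul_zero, add_zero]

theorem det_zeroCorner_succ (r : Fin (n + 1)) (s : ℕ) {M : Matrix (Fin (n + 1)) (Fin (n + 1)) R}
    (hM : ∀ i, r < i → M i 0 = 0) :
    (zeroCorner r (s + 1) M).det =
      (-1) ^ (r : ℕ) * M r 0 * (zeroCorner r s (M.submatrix r.succAbove Fin.succ)).det := by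
  have hminor : (zeroCorner r (s + 1) M).submatrix r.succAbove Fin.succ =
      zeroCorner r s (M.submatrix r.succAbove Fin.succ) := by
    ext i j
    simp only [zeroCorner, submatrix_apply, of_apply, Fin.val_fin_lt,
      Fin.succAbove_lt_iff_castSucc_lt, Fin.val_succ, add_lt_add_iff_right, ← Fin.val_castSucc i]
  rw [det_succ_column_zero, Finset.sum_eq_single r, hminor]
  · simp [zeroCorner]
  · intro i _ hi
    rcases hi.lt_or_gt with hlt | hgt
    · simp [zeroCorner, hlt]
    · simp [zeroCorner, hM i hgt]
  · simp

theorem det_zeroCorner_two_two (M : Matrix (Fin 5) (Fin 5) R) :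
    (zeroCorner 2 2 M).det =
      (M.submatrix ![0, 1] ![3, 4]).det * (M.submatrix ![2, 3, 4] ![0, 1, 2]).det
      + (M.submatrix ![0, 1] ![2, 3]).det * (M.submatrix ![2, 3, 4] ![0, 1, 4]).det
      - (M.submatrix ![0, 1] ![2, 4]).det * (M.submatrix ![2, 3, 4] ![0, 1, 3]).det := by
  simp only [det_fin_two, det_fin_three, submatrix_apply, cons_val]
  simp [zeroCorner, det_succ_row_zero, Fin.sum_univ_succ, Fin.succAbove]
  ring

end ZeroCorner

namespace IsTotallyNonneg

variable {R : Type*} [CommRing R] [LinearOrder R] [IsStrictOrderedRing R] {n : ℕ}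

theorem det_zeroCorner_succ_nonneg_of_cleared {r : Fin (n + 1)} {s : ℕ}
    (ih : ∀ N : Matrix (Fin n) (Fin n) R, IsTotallyNonneg N →
      0 ≤ (-1) ^ (r * s : ℕ) * (zeroCorner r s N).det)
    {M : Matrix (Fin (n + 1)) (Fin (n + 1)) R} (hM : IsTotallyNonneg M)
    (hzero : ∀ i, r < i → M i 0 = 0) :
    0 ≤ (-1) ^ (r * (s + 1) : ℕ) * (zeroCorner r (s + 1) M).det := by
  have hsign : (-1 : R) ^ (r * (s + 1) : ℕ) * (-1) ^ (r : ℕ) = (-1) ^ (r * s : ℕ) := by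
    rw [← pow_add, mul_add_one, add_assoc, pow_add, Even.neg_one_pow ⟨_, rfl⟩, mul_one]
  calc 0 ≤ M r 0 *
        ((-1) ^ (r * s : ℕ) * (zeroCorner r s (M.submatrix r.succAbove Fin.succ)).det) :=
        mul_nonneg (hM.apply_nonneg r 0)
          (ih _ (hM.submatrix (Fin.strictMono_succAbove r) Fin.strictMono_succ))
    _ = (-1) ^ (r * (s + 1) : ℕ) * (zeroCorner r (s + 1) M).det := by
        rw [det_zeroCorner_succ r s hzero, ← hsign]
        ring

theorem det_zeroCorner_succ_nonneg {r : Fin (n + 1)} {s : ℕ}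
    (ih : ∀ N : Matrix (Fin n) (Fin n) R, IsTotallyNonneg N →
      0 ≤ (-1) ^ (r * s : ℕ) * (zeroCorner r s N).det)
    {M : Matrix (Fin (n + 1)) (Fin (n + 1)) R} (hM : IsTotallyNonneg M)
    (k : ℕ) (hzero : ∀ i : Fin (n + 1), (r + k : ℕ) < i → M i 0 = 0) :
    0 ≤ (-1) ^ (r * (s + 1) : ℕ) * (zeroCorner r (s + 1) M).det := by
  induction k generalizing M with
  | zero => exact hM.det_zeroCorner_succ_nonneg_of_cleared ih hzero
  | succ k ihk =>
    obtain hlarge | hsmall := lt_or_ge n (r + k + 1)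
    · exact ihk hM fun i hi => by omega
    let c : Fin (n + 1) := ⟨r + k, by omega⟩
    let d : Fin (n + 1) := ⟨r + k + 1, by omega⟩
    have hcd : c ⋖ d := Fin.covBy_iff.2 (Order.covBy_add_one _)
    have hrc : (r : ℕ) ≤ c := Nat.le_add_right _ _
    have hbelow : ∀ e, d < e → M e 0 = 0 := fun e he => hzero e he
    have hclear : ∀ N : Matrix (Fin (n + 1)) (Fin (n + 1)) R, N d 0 = 0 →
        (∀ e, d < e → N e 0 = 0) → ∀ i : Fin (n + 1), (r + k : ℕ) < i → N i 0 = 0 := by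
      intro N hd hbelow i hi
      rcases (show d ≤ i from hi).eq_or_lt with rfl | hi
      · exact hd
      · exact hbelow i hi
    rcases (hM.apply_nonneg d 0).eq_or_lt with hd0 | hd0
    · exact ihk hM (hclear M hd0.symm hbelow)
    rcases (hM.apply_nonneg c 0).eq_or_lt with hc0 | hc0
    · have hrow : M c = 0 := hM.row_eq_zero hcd.lt hc0.symm hd0
      have hdet : (zeroCorner r (s + 1) M).det = 0 :=
        det_eq_zero_of_row_eq_zero c fun j => by simp [zeroCorner, hrow]
      rw [hdet, mul_zero]
    · have hstep := ihk (hM.nevilleStep hcd hbelow) (hclear _ (nevilleStep_apply_bot M c d)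
        fun e he => by rw [nevilleStep_apply_of_ne M c he.ne', hbelow e he])
      rw [det_zeroCorner_nevilleStep M hrc hcd.lt, mul_left_comm] at hstep
      exact nonneg_of_mul_nonneg_right hstep hc0

theorem det_zeroCorner_nonneg {r : ℕ} (hr : r ≤ n) (s : ℕ) {M : Matrix (Fin n) (Fin n) R}
    (hM : IsTotallyNonneg M) : 0 ≤ (-1) ^ (r * s) * (zeroCorner r s M).det := by
  induction s generalizing n with
  | zero =>
    simpa [zeroCorner_zero_right] using hM n id id strictMono_id strictMono_id
  | succ s ih =>
    cases n with
    | zero => simp [Nat.le_zero.1 hr]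
    | succ n =>
      rcases hr.eq_or_lt with rfl | hr
      · have hdet : (zeroCorner (n + 1) (s + 1) M).det = 0 :=
          det_eq_zero_of_column_eq_zero 0 fun i => if_pos ⟨i.isLt, s.succ_pos⟩
        rw [hdet, mul_zero]
      · exact det_zeroCorner_succ_nonneg (r := ⟨r, hr⟩)
          (fun N hN => ih (Nat.lt_succ_iff.1 hr) hN) hM n fun i hi => by dsimp only at hi; omega

end IsTotallyNonneg

theorem stmt_4_general {R : Type*} [CommRing R] [LinearOrder R] [IsStrictOrderedRing R]
    {Q : Matrix (Fin 5) (Fin 5) R} (hQ : IsTotallyNonneg Q) :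
    0 ≤ (Q.submatrix ![0, 1] ![3, 4]).det * (Q.submatrix ![2, 3, 4] ![0, 1, 2]).det
      + (Q.submatrix ![0, 1] ![2, 3]).det * (Q.submatrix ![2, 3, 4] ![0, 1, 4]).det
      - (Q.submatrix ![0, 1] ![2, 4]).det * (Q.submatrix ![2, 3, 4] ![0, 1, 3]).det := by
  rw [← det_zeroCorner_two_two]
  simpa [Even.neg_one_pow (by decide : Even 4)] using
    hQ.det_zeroCorner_nonneg (r := 2) (by decide) 2

theorem stmt_4 (Q : Matrix (Fin 5) (Fin 5) ℝ)
    (hTNN : ∀ (k : ℕ) (f : Fin k → Fin 5) (g : Fin k → Fin 5),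
      StrictMono f → StrictMono g → 0 ≤ (Q.submatrix f g).det) :
    0 ≤ (Q.submatrix ![0, 1] ![3, 4]).det * (Q.submatrix ![2, 3, 4] ![0, 1, 2]).det
      + (Q.submatrix ![0, 1] ![2, 3]).det * (Q.submatrix ![2, 3, 4] ![0, 1, 4]).det
      - (Q.submatrix ![0, 1] ![2, 4]).det * (Q.submatrix ![2, 3, 4] ![0, 1, 3]).det :=
  stmt_4_general hTNN
end

section
/- If G is a planar network with n sources and n' sinks and w : V → ℝ≥0 is a nonnegative vertex weighting, then the n × n' matrix Q with entries q_{ij} = Σ_{φ ∈ Φ_{i|j}} Π_{v ∈ V_φ} w(v) is totally nonnegative: every minor of Q is nonnegative. -/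
/-- `p` is a directed path in the digraph with edge relation `E`,
starting at `a` and ending at `b` (given as its list of vertices). -/
def IsDirPath {V : Type*} (E : V → V → Prop) (a b : V) (p : List V) : Prop :=
  p ≠ [] ∧ p.Chain' E ∧ p.head? = some a ∧ p.getLast? = some b

/-!
Expanding the determinant of the path matrix turns it into a signed sum over all pairs of a
permutation `σ` and a family of paths from `a i` to `b (σ i)`. If two paths of a family meet, then
exchanging their tails from a common vertex on multiplies `σ` by a transposition and preserves the
multiset of visited vertices, hence the weight. The common vertex is chosen as a function of that
multiset, and the two paths as a function of the set of paths through the vertex; both data survive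
the exchange, so the exchange is an involution and intersecting families cancel. What remains is a
sum over vertex-disjoint families, which by planarity all have `σ = 1`, so every term is a product
of nonnegative weights.

If only finitely many paths lead from one vertex to another, none of them repeats a vertex, since a
cycle on a path could be run through arbitrarily often.
-/

open Equiv Function

section Paths

variable {V : Type*} {E : V → V → Prop} {a b c d v : V} {p q p₁ p₂ q₁ q₂ : List V}

lemma IsDirPath.append_cons (hp : IsDirPath E a b (p₁ ++ v :: p₂))
    (hq : IsDirPath E c d (q₁ ++ v :: q₂)) : IsDirPath E a d (p₁ ++ v :: q₂) := by
  obtain ⟨-, hpChain, hpHead, -⟩ := hp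
  obtain ⟨-, hqChain, -, hqLast⟩ := hq
  refine ⟨by simp, ?_, ?_, ?_⟩
  · exact List.isChain_split.2 ⟨(List.isChain_split.1 hpChain).1, (List.isChain_split.1 hqChain).2⟩
  · cases p₁ <;> simpa using hpHead
  · simpa using hqLast

lemma IsDirPath.nodup_of_acyclic (hE : ∀ v, ¬ Relation.TransGen E v v) (hp : IsDirPath E a b p) :
    p.Nodup := by
  have hchain : p.IsChain (Relation.TransGen E) := hp.2.1.imp fun _ _ => Relation.TransGen.single
  refine hchain.pairwise.imp ?_
  rintro x _ hxx rfl
  exact hE x hxx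

lemma finite_setOf_isDirPath [Finite V] (hE : ∀ v, ¬ Relation.TransGen E v v) (a b : V) :
    {p | IsDirPath E a b p}.Finite := by
  cases nonempty_fintype V
  exact (List.finite_length_le V (Fintype.card V)).subset fun _ hp =>
    (hp.nodup_of_acyclic hE).length_le_card

lemma IsDirPath.exists_length_lt_of_not_nodup (hp : IsDirPath E a b p) (hdup : ¬ p.Nodup) :
    ∃ q, IsDirPath E a b q ∧ ¬ q.Nodup ∧ p.length < q.length := by
  obtain ⟨x, hx⟩ : ∃ x, [x, x].Sublist p := by simpa [List.nodup_iff_sublist] using hdup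
  obtain ⟨r₁, r₂, rfl, hx₁, hx₂⟩ := List.cons_sublist_iff.1 hx
  obtain ⟨l₁, l₂, rfl⟩ := List.append_of_mem hx₁
  obtain ⟨l₃, l₄, rfl⟩ := List.append_of_mem (List.singleton_sublist.1 hx₂)
  have hsplitLast : IsDirPath E a b ((l₁ ++ x :: l₂ ++ l₃) ++ x :: l₄) := by simpa using hp
  have hsplitFirst : IsDirPath E a b (l₁ ++ x :: (l₂ ++ l₃ ++ x :: l₄)) := by simpa using hp
  refine ⟨_, hsplitLast.append_cons hsplitFirst, fun hnodup => ?_, ?_⟩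
  · exact List.disjoint_of_nodup_append hnodup (a := x) (by simp) (by simp)
  · simp only [List.length_append, List.length_cons]
    omega

lemma IsDirPath.nodup_of_finite (hfin : {q | IsDirPath E a b q}.Finite) (hp : IsDirPath E a b p) :
    p.Nodup := by
  by_contra hdup
  have hfin' : {q | IsDirPath E a b q ∧ ¬ q.Nodup}.Finite := hfin.subset fun _ hq => hq.1
  obtain ⟨q, ⟨hq, hqdup⟩, hmax⟩ := Set.exists_max_image _ List.length hfin' ⟨p, hp, hdup⟩
  obtain ⟨r, hr, hrdup, hlt⟩ := hq.exists_length_lt_of_not_nodup hqdup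
  exact (hmax r ⟨hr, hrdup⟩).not_gt hlt

end Paths

section Splice

variable {V : Type*} [DecidableEq V] {v : V} {p p₁ p₂ q q₁ q₂ : List V}

/-- The part of `p` before the first `v`, followed by the part of `q` from the first `v` on: the
path that switches from `p` to `q` at a common vertex `v`. If `v ∉ p` the first part is all of `p`,
and if `v ∉ q` the second part is empty. -/
def splice (v : V) (p q : List V) : List V :=
  p.takeWhile (· ≠ v) ++ q.dropWhile (· ≠ v)

lemma splice_self (v : V) (p : List V) : splice v p p = p :=
  List.takeWhile_append_dropWhile

lemma splice_append_cons (hp : v ∉ p₁) (hq : v ∉ q₁) :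
    splice v (p₁ ++ v :: p₂) (q₁ ++ v :: q₂) = p₁ ++ v :: q₂ := by
  have hp' : ∀ x ∈ p₁, decide (x ≠ v) := fun x hx => by simpa using ne_of_mem_of_not_mem hx hp
  have hq' : ∀ x ∈ q₁, decide (x ≠ v) := fun x hx => by simpa using ne_of_mem_of_not_mem hx hq
  rw [splice, List.takeWhile_append_of_pos hp', List.dropWhile_append_of_pos hq']
  simp

lemma notMem_takeWhile_ne (v : V) (p : List V) : v ∉ p.takeWhile (· ≠ v) := fun hv => by
  simpa using List.mem_takeWhile_imp hv

lemma mem_splice_iff : v ∈ splice v p q ↔ v ∈ q := by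
  have hq : v ∈ q ↔ v ∈ q.dropWhile (· ≠ v) := by
    conv_lhs => rw [← splice_self v q, splice, List.mem_append]
    exact or_iff_right (notMem_takeWhile_ne v q)
  rw [splice, List.mem_append, hq]
  exact or_iff_right (notMem_takeWhile_ne v p)

lemma takeWhile_dropWhile_ne (v : V) (q : List V) :
    (q.dropWhile (· ≠ v)).takeWhile (· ≠ v) = [] := by
  rw [List.takeWhile_eq_nil_iff]
  exact List.dropWhile_get_zero_not _ _

lemma takeWhile_splice (v : V) (p q : List V) :
    (splice v p q).takeWhile (· ≠ v) = p.takeWhile (· ≠ v) := by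
  rw [splice, List.takeWhile_append_of_pos fun _ => List.mem_takeWhile_imp, takeWhile_dropWhile_ne,
    List.append_nil]

lemma dropWhile_splice (v : V) (p q : List V) :
    (splice v p q).dropWhile (· ≠ v) = q.dropWhile (· ≠ v) := by
  rw [splice, List.dropWhile_append_of_pos fun _ => List.mem_takeWhile_imp,
    List.dropWhile_idempotent]

lemma splice_splice_splice (v : V) (p p' q q' : List V) :
    splice v (splice v p q) (splice v q' p') = splice v p p' := by
  rw [splice, takeWhile_splice, dropWhile_splice, splice]

lemma IsDirPath.splice {E : V → V → Prop} {a b c d : V} (hp : IsDirPath E a b p)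
    (hq : IsDirPath E c d q) (hvp : v ∈ p) (hvq : v ∈ q) :
    IsDirPath E a d (splice v p q) := by
  obtain ⟨p₁, p₂, rfl, hp₁⟩ := List.eq_append_cons_of_mem hvp
  obtain ⟨q₁, q₂, rfl, hq₁⟩ := List.eq_append_cons_of_mem hvq
  rw [splice_append_cons hp₁ hq₁]
  exact hp.append_cons hq

end Splice

section PermuteTails

variable {V ι : Type*} [DecidableEq V] {v : V} {τ : Perm ι} {p : ι → List V}

/-- The family in which the `i`-th list is followed up to its first `v` and then continues like
the `τ i`-th list; for a transposition `τ` of two paths through `v` this exchanges their tails. -/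
def permuteTails (v : V) (τ : Perm ι) (p : ι → List V) : ι → List V :=
  fun i => splice v (p i) (p (τ i))

lemma permuteTails_permuteTails (v : V) (σ τ : Perm ι) (p : ι → List V) :
    permuteTails v σ (permuteTails v τ p) = permuteTails v (τ * σ) p :=
  funext fun _ => splice_splice_splice ..

lemma permuteTails_one (v : V) (p : ι → List V) : permuteTails v 1 p = p :=
  funext fun i => splice_self v (p i)

lemma mem_permuteTails_iff (hτ : ∀ i, τ i ≠ i → v ∈ p i) (i : ι) :
    v ∈ permuteTails v τ p i ↔ v ∈ p i := by
  rw [permuteTails, mem_splice_iff]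
  by_cases hi : τ i = i
  · rw [hi]
  · exact iff_of_true (hτ _ (τ.injective.ne hi)) (hτ i hi)

lemma isDirPath_permuteTails {E : V → V → Prop} {a b : ι → V}
    (hp : ∀ i, IsDirPath E (a i) (b i) (p i)) (hτ : ∀ i, τ i ≠ i → v ∈ p i) (i : ι) :
    IsDirPath E (a i) (b (τ i)) (permuteTails v τ p i) := by
  by_cases hi : τ i = i
  · rw [permuteTails, hi, splice_self]
    exact hp i
  · exact (hp i).splice (hp (τ i)) (hτ i hi) (hτ _ (τ.injective.ne hi))

end PermuteTails

section VisitedVertices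

variable {V ι : Type*} [Fintype ι]

/-- The vertices visited by a family of paths, counted with multiplicity. -/
def visitedVertices (p : ι → List V) : Multiset V :=
  ∑ i, (p i : Multiset V)

lemma prod_map_visitedVertices {M : Type*} [CommMonoid M] (w : V → M) (p : ι → List V) :
    ((visitedVertices p).map w).prod = ∏ i, ((p i).map w).prod := by
  rw [visitedVertices, ← Multiset.coe_mapAddMonoidHom, map_sum, Multiset.prod_sum]
  simp only [Multiset.coe_mapAddMonoidHom, Multiset.map_coe, Multiset.prod_coe]

lemma visitedVertices_permuteTails [DecidableEq V] (v : V) (τ : Perm ι) (p : ι → List V) :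
    visitedVertices (permuteTails v τ p) = visitedVertices p := by
  simp only [visitedVertices, permuteTails, splice, ← Multiset.coe_add, Finset.sum_add_distrib]
  rw [Equiv.sum_comp τ fun i => ((p i).dropWhile (· ≠ v) : Multiset V), ← Finset.sum_add_distrib]
  simp only [Multiset.coe_add, List.takeWhile_append_dropWhile]

lemma one_lt_count_visitedVertices_iff [DecidableEq V] {p : ι → List V} (hp : ∀ i, (p i).Nodup)
    (v : V) :
    1 < (visitedVertices p).count v ↔ {i | v ∈ p i}.Nontrivial := by
  have hcount : (visitedVertices p).count v = Finset.card {i | v ∈ p i} := by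
    rw [visitedVertices, Multiset.count_sum', Finset.card_filter]
    exact Finset.sum_congr rfl fun i _ => (Multiset.coe_count v (p i)).trans (hp i).count
  rw [hcount, Finset.one_lt_card_iff_nontrivial, Finset.Nontrivial, Finset.coe_filter_univ]

lemma nodup_visitedVertices_iff {p : ι → List V} (hp : ∀ i, (p i).Nodup) :
    (visitedVertices p).Nodup ↔ Pairwise (List.Disjoint on p) := by
  classical
  simp only [Multiset.nodup_iff_count_le_one, ← not_lt, one_lt_count_visitedVertices_iff hp]
  refine ⟨fun h i j hij v hi hj => h v ⟨i, hi, j, hj, hij⟩, ?_⟩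
  rintro h v ⟨i, hi, j, hj, hij⟩
  exact h hij hi hj

end VisitedVertices

section Crossing

variable {V ι : Type*} [Fintype ι] [DecidableEq V] [DecidableEq ι]

lemma exists_transposition_of_nontrivial {S : Set ι} (hS : S.Nontrivial) :
    ∃ τ : Perm ι, Perm.sign τ = -1 ∧ τ * τ = 1 ∧ ∀ i, τ i ≠ i → i ∈ S := by
  obtain ⟨i, hi, j, hj, hij⟩ := hS
  refine ⟨swap i j, Perm.sign_swap hij, swap_mul_self i j, fun k hk => ?_⟩
  obtain ⟨-, rfl | rfl⟩ := swap_apply_ne_self_iff.1 hk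
  exacts [hi, hj]

-- Letting `v p` depend on `visitedVertices p` only, and `τ p` on `{i | v p ∈ p i}` only, makes both
-- invariant.
lemma exists_invariant_crossing [Nonempty V] :
    ∃ (v : (ι → List V) → V) (τ : (ι → List V) → Perm ι), ∀ p : ι → List V,
      (∀ i, (p i).Nodup) → ¬ (visitedVertices p).Nodup →
        (Perm.sign (τ p) = -1 ∧ τ p * τ p = 1 ∧ ∀ i, τ p i ≠ i → v p ∈ p i) ∧
        v (permuteTails (v p) (τ p) p) = v p ∧ τ (permuteTails (v p) (τ p) p) = τ p := by
  have hvertex (m : Multiset V) (hm : ¬ m.Nodup) : ∃ u, 1 < m.count u := by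
    simpa [Multiset.nodup_iff_count_le_one] using hm
  choose! vertex hvertex using hvertex
  choose! perm hperm using fun (S : Set ι) => exists_transposition_of_nontrivial (S := S)
  let v (p : ι → List V) : V := vertex (visitedVertices p)
  let τ (p : ι → List V) : Perm ι := perm {i | v p ∈ p i}
  refine ⟨v, τ, fun p hnodup hmeet => ?_⟩
  have hshared : {i | v p ∈ p i}.Nontrivial :=
    (one_lt_count_visitedVertices_iff hnodup _).1 (hvertex (visitedVertices p) hmeet)
  have hτ := hperm _ hshared
  have hv : v (permuteTails (v p) (τ p) p) = v p :=
    congrArg vertex (visitedVertices_permuteTails ..)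
  refine ⟨hτ, hv, congrArg perm (Set.ext fun i => ?_)⟩
  rw [Set.mem_ofPred_eq, hv]
  exact mem_permuteTails_iff hτ.2.2 i

end Crossing

section PathMatrix

variable {V ι κ R : Type*}

/-- The matrix whose `(i, j)` entry is the weighted count of the directed paths from `a i` to `b j`,
a path being weighted by the product of the weights of its vertices. An entry is `0` by convention
when infinitely many paths have nonzero weight. -/
noncomputable def pathMatrix [CommSemiring R] (E : V → V → Prop) (w : V → R) (a : ι → V)
    (b : κ → V) : Matrix ι κ R :=
  Matrix.of fun i j => ∑ᶠ p ∈ {p : List V | IsDirPath E (a i) (b j) p}, (p.map w).prod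

/-- The pairs of a permutation `σ` and a family of paths, the `i`-th of which leads from `a i` to
`b (σ i)`: the index set of the expanded determinant of the path matrix. -/
def pathSystems (E : V → V → Prop) (a b : ι → V) : Set (Perm ι × (ι → List V)) :=
  {x | ∀ i, IsDirPath E (a i) (b (x.1 i)) (x.2 i)}

/-- The path systems whose paths are pairwise vertex-disjoint; these are the flows from `a` to `b`,
together with the permutation they induce. -/
def disjointPathSystems (E : V → V → Prop) (a b : ι → V) : Set (Perm ι × (ι → List V)) :=
  {x ∈ pathSystems E a b | Pairwise (List.Disjoint on x.2)}

/-- The weight of the vertices visited by a path system, with the sign of its permutation. -/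
def signedWeight [Fintype ι] [DecidableEq ι] [CommRing R] (w : V → R)
    (x : Perm ι × (ι → List V)) : R :=
  ((Perm.sign x.1 : ℤ) : R) * ((visitedVertices x.2).map w).prod

variable {E : V → V → Prop} {a b : ι → V}

lemma finite_pathSystems [Finite ι] (hfin : ∀ i j, {p | IsDirPath E (a i) (b j) p}.Finite) :
    (pathSystems E a b).Finite := by
  have hpaths : (Set.univ.pi fun i => ⋃ j, {p | IsDirPath E (a i) (b j) p}).Finite :=
    Set.Finite.pi fun i => Set.finite_iUnion (hfin i)
  exact (Set.finite_univ.prod hpaths).subset fun x hx =>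
    ⟨trivial, fun i _ => Set.mem_iUnion.2 ⟨x.1 i, hx i⟩⟩

variable [Fintype ι]

lemma mem_pathSystems_sdiff_disjointPathSystems_iff
    (hfin : ∀ i j, {p | IsDirPath E (a i) (b j) p}.Finite) {x : Perm ι × (ι → List V)} :
    x ∈ pathSystems E a b \ disjointPathSystems E a b ↔
      x ∈ pathSystems E a b ∧ ¬ (visitedVertices x.2).Nodup := by
  classical
  refine and_congr_right fun hx => not_congr ?_
  rw [nodup_visitedVertices_iff fun i => (hx i).nodup_of_finite (hfin _ _)]
  exact and_iff_right hx

variable [DecidableEq ι] [CommRing R]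

lemma det_pathMatrix_eq_finsum_pathSystems
    (hfin : ∀ i j, {p | IsDirPath E (a i) (b j) p}.Finite) (w : V → R) :
    (pathMatrix E w a b).det = ∑ᶠ x ∈ pathSystems E a b, signedWeight w x := by
  rw [finsum_mem_eq_finite_toFinset_sum _ (finite_pathSystems hfin),
    Finset.sum_finset_product _ Finset.univ
      (fun σ => Fintype.piFinset fun i => (hfin i (σ i)).toFinset) (by simp [pathSystems]),
    ← Matrix.det_transpose, Matrix.det_apply']
  refine Finset.sum_congr rfl fun σ _ => ?_
  simp only [signedWeight, prod_map_visitedVertices, ← Finset.mul_sum, Matrix.transpose_apply,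
    pathMatrix, Matrix.of_apply, finsum_mem_eq_finite_toFinset_sum _ (hfin _ _),
    Finset.prod_univ_sum]

lemma finsum_signedWeight_sdiff_disjointPathSystems
    (hfin : ∀ i j, {p | IsDirPath E (a i) (b j) p}.Finite) (w : V → R) :
    ∑ᶠ x ∈ pathSystems E a b \ disjointPathSystems E a b, signedWeight w x = 0 := by
  classical
  have hB : (pathSystems E a b \ disjointPathSystems E a b).Finite :=
    (finite_pathSystems hfin).sdiff
  have hmem {x} : x ∈ hB.toFinset ↔ x ∈ pathSystems E a b ∧ ¬ (visitedVertices x.2).Nodup :=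
    hB.mem_toFinset.trans (mem_pathSystems_sdiff_disjointPathSystems_iff hfin)
  rw [finsum_mem_eq_finite_toFinset_sum _ hB]
  obtain _ | _ := isEmpty_or_nonempty V
  · refine Finset.sum_eq_zero fun x hx => ((hmem.1 hx).2 ?_).elim
    rw [Subsingleton.elim (visitedVertices x.2) 0]
    exact Multiset.nodup_zero
  obtain ⟨v, τ, hcross⟩ := exists_invariant_crossing (V := V) (ι := ι)
  have hexchange {x} (hx : x ∈ hB.toFinset) := hcross x.2
    (fun i => ((hmem.1 hx).1 i).nodup_of_finite (hfin _ _)) (hmem.1 hx).2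
  refine Finset.sum_involution
    (fun x _ => (x.1 * τ x.2, permuteTails (v x.2) (τ x.2) x.2)) ?_ ?_ ?_ ?_
  · intro x hx
    obtain ⟨⟨hsign, -, -⟩, -⟩ := hexchange hx
    simp [signedWeight, visitedVertices_permuteTails, hsign]
  · intro x hx _ hfix
    obtain ⟨⟨hsign, -, -⟩, -⟩ := hexchange hx
    have hone : τ x.2 = 1 := mul_eq_left.1 (congrArg Prod.fst hfix)
    rw [hone, Perm.sign_one] at hsign
    exact absurd hsign (by decide)
  · intro x hx
    obtain ⟨⟨-, -, hmoved⟩, -⟩ := hexchange hx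
    rw [hmem, visitedVertices_permuteTails]
    exact ⟨isDirPath_permuteTails (hmem.1 hx).1 hmoved, (hmem.1 hx).2⟩
  · intro x hx
    obtain ⟨⟨-, hsq, -⟩, hv, hτ⟩ := hexchange hx
    simp only [hv, hτ, mul_assoc, permuteTails_permuteTails, hsq, permuteTails_one, mul_one]

/-- The **Lindström–Gessel–Viennot lemma**. -/
theorem det_pathMatrix (hfin : ∀ i j, {p | IsDirPath E (a i) (b j) p}.Finite) (w : V → R) :
    (pathMatrix E w a b).det = ∑ᶠ x ∈ disjointPathSystems E a b, signedWeight w x := by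
  have hsub : disjointPathSystems E a b ⊆ pathSystems E a b := Set.sep_subset _ _
  rw [det_pathMatrix_eq_finsum_pathSystems hfin,
    ← finsum_mem_add_sdiff hsub (finite_pathSystems hfin),
    finsum_signedWeight_sdiff_disjointPathSystems hfin, add_zero]

lemma det_pathMatrix_nonneg [PartialOrder R] [IsOrderedRing R]
    (hfin : ∀ i j, {p | IsDirPath E (a i) (b j) p}.Finite) {w : V → R} (hw : ∀ v, 0 ≤ w v)
    (hsign : ∀ x ∈ disjointPathSystems E a b, Perm.sign x.1 = 1) :
    0 ≤ (pathMatrix E w a b).det := by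
  rw [det_pathMatrix hfin]
  refine finsum_mem_induction (0 ≤ ·) le_rfl (fun _ _ => add_nonneg) fun x hx => ?_
  rw [signedWeight, hsign x hx, Units.val_one, Int.cast_one, one_mul]
  refine Multiset.prod_nonneg fun r hr => ?_
  obtain ⟨v, -, rfl⟩ := Multiset.mem_map.1 hr
  exact hw v

end PathMatrix

theorem stmt_10_general {V ι κ R : Type*} [Preorder ι] [Preorder κ]
    [CommRing R] [PartialOrder R] [IsOrderedRing R] (E : V → V → Prop) (s : ι → V) (t : κ → V)
    (hfin : ∀ i j, {p | IsDirPath E (s i) (t j) p}.Finite)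
    (w : V → R) (hw : ∀ v, 0 ≤ w v)
    (hplanar : ∀ (k : ℕ) (α : Fin k → ι) (β : Fin k → κ), StrictMono α → StrictMono β →
      ∀ (σ : Perm (Fin k)) (p : Fin k → List V),
        (∀ i, IsDirPath E (s (α i)) (t (β (σ i))) (p i)) →
        (∀ i j, i ≠ j → ∀ v, v ∈ p i → v ∉ p j) → σ = 1) :
    ∀ (k : ℕ) (α : Fin k → ι) (β : Fin k → κ), StrictMono α → StrictMono β →
      0 ≤ ((pathMatrix E w s t).submatrix α β).det := by
  intro k α β hα hβ
  refine det_pathMatrix_nonneg (a := s ∘ α) (b := t ∘ β) (fun i j => hfin (α i) (β j)) hw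
    fun x hx => ?_
  have hone : x.1 = 1 :=
    hplanar k α β hα hβ x.1 x.2 hx.1 fun i j hij v hi hj => hx.2 hij hi hj
  rw [hone, Perm.sign_one]

/-- The matrix of weighted path sums of a planar network with a nonnegative
vertex weighting is totally nonnegative. -/
theorem stmt_10 {V : Type} [Fintype V] [DecidableEq V]
    (E : V → V → Prop)
    -- the digraph is acyclic
    (hacyc : ∀ v : V, ¬ Relation.TransGen E v v)
    {n n' : ℕ} (s : Fin n → V) (t : Fin n' → V)
    (w : V → ℝ) (hw : ∀ v, 0 ≤ w v)
    -- planarity (in the form used: any family of pairwise vertex-disjoint directed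
    -- paths from sources to sinks connects them in the order-preserving way)
    (hplanar : ∀ (k : ℕ) (α : Fin k → Fin n) (β : Fin k → Fin n'),
      StrictMono α → StrictMono β →
      ∀ (σ : Equiv.Perm (Fin k)) (p : Fin k → List V),
        (∀ i, IsDirPath E (s (α i)) (t (β (σ i))) (p i)) →
        (∀ i j, i ≠ j → ∀ v, v ∈ p i → v ∉ p j) → σ = 1)
    (Q : Matrix (Fin n) (Fin n') ℝ)
    (hQ : ∀ i j, Q i j = ∑ᶠ p ∈ {p : List V | IsDirPath E (s i) (t j) p}, (p.map w).prod) :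
    ∀ (k : ℕ) (α : Fin k → Fin n) (β : Fin k → Fin n'),
      StrictMono α → StrictMono β → 0 ≤ (Q.submatrix α β).det := by
  obtain rfl : Q = pathMatrix E w s t := Matrix.ext hQ
  exact stmt_10_general E s t (fun _ _ => finite_setOf_isDirPath hacyc _ _) w hw hplanar
end
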